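/- Let κ be a regular uncountable cardinal and suppose there exists a club-guessing sequence on S^κ_ω. Then there exists a normal 2-bounded coloring f : [κ]² → κ such that no club subset of κ is f-rainbow; in particular κ ↛^poly (κ-cl)²_{2-bdd}. -/

import Mathlib

open Set Cardinal Ordinal

universe u

/-- `A` has order type `θ`: there is an order isomorphism from `Iio θ` onto `A`. -/
def HasOType (A : Set Ordinal.{u}) (θ : Ordinal.{u}) : Prop :=
  Nonempty (Set.Iio θ ≃o A)

/-- The order type of `A` is at most `γ`: `A` order-embeds into `Iio γ`. -/
def OTypeLE (A : Set Ordinal.{u}) (γ : Ordinal.{u}) : Prop :=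
  Nonempty (A ↪o Set.Iio γ)

/-- `A` is `f`-rainbow: `f` is injective on increasing pairs from `A`. -/
def IsRainbow (f : Ordinal → Ordinal → Ordinal) (A : Set Ordinal) : Prop :=
  ∀ α ∈ A, ∀ β ∈ A, ∀ γ ∈ A, ∀ δ ∈ A,
    α < β → γ < δ → f α β = f γ δ → α = γ ∧ β = δ

/-- `f` is a normal coloring on pairs below `κ`: equal colors force equal top points. -/
def IsNormalColoring (f : Ordinal → Ordinal → Ordinal) (κ : Ordinal) : Prop :=
  ∀ α β γ δ : Ordinal, α < β → β < κ → γ < δ → δ < κ → f α β = f γ δ → β = δ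

/-- `f` is 2-bounded: every fiber of `f` on pairs below `κ` has at most two elements. -/
def TwoBounded (f : Ordinal → Ordinal → Ordinal) (κ : Ordinal) : Prop :=
  ∀ ξ : Ordinal, {p : Ordinal × Ordinal | p.1 < p.2 ∧ p.2 < κ ∧ f p.1 p.2 = ξ}.encard ≤ 2

/-- `f` is `<ω`-bounded: every fiber of `f` on pairs below `κ` is finite. -/
def FinBounded (f : Ordinal → Ordinal → Ordinal) (κ : Ordinal) : Prop :=
  ∀ ξ : Ordinal, {p : Ordinal × Ordinal | p.1 < p.2 ∧ p.2 < κ ∧ f p.1 p.2 = ξ}.Finite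

/-- `f` is `ω`-bounded: every fiber of `f` on pairs below `κ` is countable. -/
def OmegaBounded (f : Ordinal → Ordinal → Ordinal) (κ : Ordinal) : Prop :=
  ∀ ξ : Ordinal, {p : Ordinal × Ordinal | p.1 < p.2 ∧ p.2 < κ ∧ f p.1 p.2 = ξ}.Countable

/-- `A` is a closed set of ordinals: any nonzero `α` below `sup A` which is the
supremum of the elements of `A` below it belongs to `A`. -/
def IsClosedSet (A : Set Ordinal) : Prop :=
  ∀ α : Ordinal, α < sSup A → α ≠ 0 → sSup (A ∩ Set.Iio α) = α → α ∈ A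

/-- `C` is club in `δ`: a subset of `δ`, unbounded in `δ`, and closed below `δ`. -/
def IsClubIn (C : Set Ordinal) (δ : Ordinal) : Prop :=
  C ⊆ Set.Iio δ ∧ (∀ α < δ, ∃ β ∈ C, α ≤ β) ∧
  ∀ α : Ordinal, α < δ → α ≠ 0 → sSup (C ∩ Set.Iio α) = α → α ∈ C

/-- `A` is stationary in `δ`: it meets every club in `δ`. -/
def IsStationaryIn (A : Set Ordinal) (δ : Ordinal) : Prop :=
  ∀ C : Set Ordinal, IsClubIn C δ → (A ∩ C).Nonempty

/-- `f` is `<bd`-type bounded on pairs below `κ`: some `γ < bd` bounds the order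
type of every color class `t_{ηβ} = {ξ < β | f ξ β = f η β}`. -/
def TypeBounded (f : Ordinal → Ordinal → Ordinal) (κ bd : Ordinal) : Prop :=
  ∃ γ < bd, ∀ η β : Ordinal, η < β → β < κ →
    OTypeLE {ξ : Ordinal | ξ < β ∧ f ξ β = f η β} γ

/-- `f` is `<bd`-type bounded relative to the set `A`. -/
def TypeBoundedOn (f : Ordinal → Ordinal → Ordinal) (A : Set Ordinal) (bd : Ordinal) : Prop :=
  ∃ γ < bd, ∀ η ∈ A, ∀ β ∈ A, η < β →
    OTypeLE {ξ : Ordinal | ξ ∈ A ∧ ξ < β ∧ f ξ β = f η β} γ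

/-! A club-guessing sequence lets one fix two points `a δ < b δ` of each ladder `C δ` in advance.
Start from an injective coloring of pairs and, for each top point `δ`, give the pairs `{a δ, δ}` and
`{b δ, δ}` the same color. Each color is then used at most twice, always with the same top point. A
club that contains the ladder `C δ` contains `a δ`, `b δ` and, by closedness, `δ`, so it is not
rainbow. -/

/-- `C` is a cofinal subset of `δ`. The inequality `α ≤ β` is weak, so a successor ordinal has
cofinal subsets as well. -/
def IsCofinalIn (C : Set Ordinal) (δ : Ordinal) : Prop :=
  C ⊆ Iio δ ∧ ∀ α < δ, ∃ β ∈ C, α ≤ β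

section Cofinal

variable {A C D : Set Ordinal.{u}} {δ o : Ordinal.{u}}

theorem isClubIn_Iio (o : Ordinal) : IsClubIn (Iio o) o :=
  ⟨Subset.rfl, fun α hα => ⟨α, hα, le_rfl⟩, fun _ hα _ _ => hα⟩

namespace IsCofinalIn

theorem exists_lt (hC : IsCofinalIn C δ) (hδ : Order.IsSuccLimit δ) {α : Ordinal}
    (hα : α < δ) : ∃ β ∈ C, α < β :=
  let ⟨β, hβ, hle⟩ := hC.2 _ (hδ.succ_lt hα)
  ⟨β, hβ, Order.succ_le_iff.1 hle⟩

theorem nonempty (hC : IsCofinalIn C δ) (hδ : Order.IsSuccLimit δ) : C.Nonempty :=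
  let ⟨β, hβ, _⟩ := hC.2 0 hδ.bot_lt
  ⟨β, hβ⟩

theorem exists_pair_lt (hC : IsCofinalIn C δ) (hδ : Order.IsSuccLimit δ) :
    ∃ α ∈ C, ∃ β ∈ C, α < β :=
  let ⟨α, hα⟩ := hC.nonempty hδ
  ⟨α, hα, hC.exists_lt hδ (hC.1 hα)⟩

theorem sSup_eq (hC : IsCofinalIn C δ) (hδ : Order.IsSuccLimit δ) : sSup C = δ :=
  csSup_eq_of_forall_le_of_forall_lt_exists_gt (hC.nonempty hδ) (fun _ hβ => (hC.1 hβ).le)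
    fun _ hα => hC.exists_lt hδ hα

theorem inter_Iio (hC : IsCofinalIn C δ) (hCD : C ⊆ D) : IsCofinalIn (D ∩ Iio δ) δ :=
  ⟨inter_subset_right, fun α hα =>
    let ⟨β, hβ, hle⟩ := hC.2 α hα
    ⟨β, ⟨hCD hβ, hC.1 hβ⟩, hle⟩⟩

end IsCofinalIn

theorem IsClubIn.mem_of_isCofinalIn (hD : IsClubIn D o) (hδo : δ < o)
    (hδ : Order.IsSuccLimit δ) (hC : IsCofinalIn C δ) (hCD : C ⊆ D) : δ ∈ D :=
  hD.2.2 δ hδo hδ.bot_lt.ne' ((hC.inter_Iio hCD).sSup_eq hδ)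

theorem HasOType.isCofinalIn (hA : HasOType A o) (hAo : A ⊆ Iio o) : IsCofinalIn A o := by
  obtain ⟨e⟩ := hA
  have hmono : StrictMono fun x => (⟨e x, hAo (e x).2⟩ : Iio o) := e.strictMono
  exact ⟨hAo, fun α hα => ⟨e ⟨α, hα⟩, (e _).2, hmono.le_apply (x := ⟨α, hα⟩)⟩⟩

theorem IsClosedSet.isClubIn (hA : IsClosedSet A) (hAo : IsCofinalIn A o) : IsClubIn A o := by
  refine ⟨hAo.1, hAo.2, fun α hα h0 hsup => ?_⟩
  obtain ⟨β, hβ, hαβ⟩ := hAo.2 α hα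
  have hβ_le : β ≤ sSup A := le_csSup ⟨o, fun _ hx => (hAo.1 hx).le⟩ hβ
  obtain hlt | rfl := hαβ.lt_or_eq
  · exact hA α (hlt.trans_le hβ_le) h0 hsup
  · exact hβ

end Cofinal

theorem eq_or_eq_of_update_id_eq {α : Type*} [DecidableEq α] {x y z w : α}
    (h : Function.update id x y z = w) : z = w ∨ z = x := by
  grind

theorem exists_mapsTo_injOn_prod_self {α : Type*} {s : Set α} (hs : s.Infinite) :
    ∃ p : α × α → α, MapsTo p (s ×ˢ s) s ∧ InjOn p (s ×ˢ s) := by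
  have : Infinite s := hs.to_subtype
  obtain ⟨e⟩ : Nonempty (s × s ≃ s) := Cardinal.eq.1 (by simp)
  have hval : Function.Injective (Prod.map Subtype.val Subtype.val : s × s → α × α) :=
    Subtype.val_injective.prodMap Subtype.val_injective
  have hrange : s ×ˢ s = range (Prod.map Subtype.val Subtype.val : s × s → α × α) := by
    simp only [range_prodMap, Subtype.range_coe]
  refine ⟨Function.extend (Prod.map Subtype.val Subtype.val) (Subtype.val ∘ e) Prod.fst, ?_, ?_⟩
  · rw [hrange]
    rintro _ ⟨x, rfl⟩
    rw [hval.extend_apply]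
    exact (e x).2
  · rw [hrange]
    rintro _ ⟨x, rfl⟩ _ ⟨y, rfl⟩ h
    rw [hval.extend_apply, hval.extend_apply] at h
    rw [e.injective (Subtype.val_injective h)]

open Classical in
/-- The coloring `p (ξ, δ)` of pairs `ξ < δ`, except that `{b δ, δ}` receives the color of
`{a δ, δ}`. -/
noncomputable def mergeColoring (p : Ordinal × Ordinal → Ordinal) (a b : Ordinal → Ordinal)
    (ξ δ : Ordinal) : Ordinal :=
  p (Function.update id (b δ) (a δ) ξ, δ)

section MergeColoring

variable {p : Ordinal.{u} × Ordinal.{u} → Ordinal.{u}} {a b : Ordinal.{u} → Ordinal.{u}}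
  {o : Ordinal.{u}}

theorem mergeColoring_left_eq_right (p : Ordinal × Ordinal → Ordinal) (a b : Ordinal → Ordinal)
    (δ : Ordinal) : mergeColoring p a b (a δ) δ = mergeColoring p a b (b δ) δ := by
  simp [mergeColoring, Function.update_apply]

open Classical in
theorem update_id_mk_mem_prod {α β ξ δ : Ordinal} (hαβ : α ≤ β) (hξδ : ξ < δ) (hδ : δ < o) :
    (Function.update id β α ξ, δ) ∈ Iio o ×ˢ Iio o :=
  have hle : Function.update id β α ξ ≤ ξ := update_le_self_iff.2 hαβ ξ
  ⟨(hle.trans_lt hξδ).trans hδ, hδ⟩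

theorem mergeColoring_lt (hp : MapsTo p (Iio o ×ˢ Iio o) (Iio o)) {ξ δ : Ordinal}
    (hab : a δ ≤ b δ) (hξδ : ξ < δ) (hδ : δ < o) : mergeColoring p a b ξ δ < o :=
  hp (update_id_mk_mem_prod hab hξδ hδ)

theorem isNormalColoring_mergeColoring (hp : InjOn p (Iio o ×ˢ Iio o)) (hab : ∀ δ, a δ ≤ b δ) :
    IsNormalColoring (mergeColoring p a b) o := fun _ _ _ _ hαβ hβ hγδ hδ h =>
  congrArg Prod.snd <|
    hp (update_id_mk_mem_prod (hab _) hαβ hβ) (update_id_mk_mem_prod (hab _) hγδ hδ) h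

theorem twoBounded_mergeColoring (hp : InjOn p (Iio o ×ˢ Iio o)) (hab : ∀ δ, a δ ≤ b δ) :
    TwoBounded (mergeColoring p a b) o := by
  classical
  intro ξ
  obtain hempty | ⟨⟨η, δ⟩, hηδ, hδ, hη⟩ := eq_empty_or_nonempty
    {q : Ordinal × Ordinal | q.1 < q.2 ∧ q.2 < o ∧ mergeColoring p a b q.1 q.2 = ξ}
  · simp [hempty]
  · have hpair : ({(Function.update id (b δ) (a δ) η, δ), (b δ, δ)} :
        Set (Ordinal × Ordinal)).encard ≤ 2 :=
      (encard_insert_le _ _).trans (by rw [encard_singleton, one_add_one_eq_two])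
    refine (encard_le_encard ?_).trans hpair
    rintro ⟨α, β⟩ ⟨hαβ, hβ, hα⟩
    obtain ⟨hupdate, rfl⟩ := Prod.mk.inj <|
      hp (update_id_mk_mem_prod (hab _) hαβ hβ) (update_id_mk_mem_prod (hab _) hηδ hδ)
        (hα.trans hη.symm)
    exact (eq_or_eq_of_update_id_eq hupdate).imp (congrArg (·, β)) (congrArg (·, β))

theorem not_isRainbow_mergeColoring (p : Ordinal × Ordinal → Ordinal) {D : Set Ordinal}
    {δ : Ordinal} (ha : a δ ∈ D) (hb : b δ ∈ D) (hδ : δ ∈ D) (hab : a δ < b δ) (hbδ : b δ < δ) :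
    ¬ IsRainbow (mergeColoring p a b) D := fun hD =>
  hab.ne (hD _ ha _ hδ _ hb _ hδ (hab.trans hbδ) hbδ (mergeColoring_left_eq_right p a b δ)).1

end MergeColoring

/-- `C` is a club-guessing sequence on a set `S` of limit ordinals below `o`: every club in `o`
includes some ladder `C δ`. The ladders may have any order type. -/
structure IsClubGuessing (o : Ordinal.{u}) (S : Set Ordinal.{u})
    (C : Ordinal.{u} → Set Ordinal.{u}) : Prop where
  lt : ∀ δ ∈ S, δ < o
  isSuccLimit : ∀ δ ∈ S, Order.IsSuccLimit δ
  isCofinalIn : ∀ δ ∈ S, IsCofinalIn (C δ) δ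
  exists_subset : ∀ D, IsClubIn D o → ∃ δ ∈ S, C δ ⊆ D

namespace IsClubGuessing

variable {o : Ordinal.{u}} {S : Set Ordinal.{u}} {C : Ordinal.{u} → Set Ordinal.{u}}

theorem infinite_Iio (h : IsClubGuessing o S C) : (Iio o).Infinite := by
  obtain ⟨δ, hδ, -⟩ := h.exists_subset _ (isClubIn_Iio o)
  have hω : ω ≤ o := (omega0_le_of_isSuccLimit (h.isSuccLimit δ hδ)).trans (h.lt δ hδ).le
  rw [← infinite_coe_iff, Cardinal.infinite_iff, Cardinal.mk_Iio_ordinal, aleph0_le_lift,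
    aleph0_le_card]
  exact hω

theorem exists_ladder_pair (h : IsClubGuessing o S C) : ∃ a b : Ordinal → Ordinal,
    (∀ δ, a δ ≤ b δ) ∧ ∀ δ ∈ S, a δ ∈ C δ ∧ b δ ∈ C δ ∧ a δ < b δ := by
  have hpair : ∀ δ, ∃ α β, α ≤ β ∧ (δ ∈ S → α ∈ C δ ∧ β ∈ C δ ∧ α < β) := fun δ => by
    by_cases hδ : δ ∈ S
    · obtain ⟨α, hα, β, hβ, hlt⟩ := (h.isCofinalIn δ hδ).exists_pair_lt (h.isSuccLimit δ hδ)
      exact ⟨α, β, hlt.le, fun _ => ⟨hα, hβ, hlt⟩⟩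
    · exact ⟨0, 0, le_rfl, fun hδ' => absurd hδ' hδ⟩
  choose a b hle hlt using hpair
  exact ⟨a, b, hle, hlt⟩

theorem exists_coloring_not_isRainbow (h : IsClubGuessing o S C) :
    ∃ f : Ordinal → Ordinal → Ordinal, (∀ α β, α < β → β < o → f α β < o) ∧
      IsNormalColoring f o ∧ TwoBounded f o ∧ ∀ D, IsClubIn D o → ¬ IsRainbow f D := by
  obtain ⟨p, hmaps, hinj⟩ := exists_mapsTo_injOn_prod_self h.infinite_Iio
  obtain ⟨a, b, hle, hC⟩ := h.exists_ladder_pair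
  refine ⟨mergeColoring p a b, fun _ _ => mergeColoring_lt hmaps (hle _),
    isNormalColoring_mergeColoring hinj hle, twoBounded_mergeColoring hinj hle, fun D hD => ?_⟩
  obtain ⟨δ, hδ, hCD⟩ := h.exists_subset D hD
  obtain ⟨ha, hb, hlt⟩ := hC δ hδ
  have hcof := h.isCofinalIn δ hδ
  have hδD : δ ∈ D := hD.mem_of_isCofinalIn (h.lt δ hδ) (h.isSuccLimit δ hδ) hcof hCD
  exact not_isRainbow_mergeColoring p (hCD ha) (hCD hb) hδD hlt (hcof.1 hb)

end IsClubGuessing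

theorem stmt2_general {o : Ordinal} {S : Set Ordinal} {C : Ordinal → Set Ordinal}
    (hguess : IsClubGuessing o S C) :
    ∃ f : Ordinal → Ordinal → Ordinal,
      (∀ α β : Ordinal, α < β → β < o → f α β < o) ∧
      IsNormalColoring f o ∧
      TwoBounded f o ∧
      (∀ D : Set Ordinal, IsClubIn D o → ¬ IsRainbow f D) ∧
      ∀ A : Set Ordinal, A ⊆ Iio o → IsClosedSet A → HasOType A o → ¬ IsRainbow f A :=
  let ⟨f, hlt, hnormal, hbdd, hclub⟩ := hguess.exists_coloring_not_isRainbow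
  ⟨f, hlt, hnormal, hbdd, hclub, fun A hAo hA htype =>
    hclub A (hA.isClubIn (htype.isCofinalIn hAo))⟩

/-- If `κ` is regular uncountable and there is a club-guessing sequence on
`S^κ_ω = {δ < κ | cf δ = ω}`, then there is a normal 2-bounded coloring on `[κ]²`
such that no club subset of `κ` is rainbow; in particular no closed subset of
order type `κ` is rainbow, i.e. `κ ↛^poly (κ-cl)²_{2-bdd}`. -/
theorem stmt2 (κ : Cardinal) (hreg : κ.IsRegular) (huncount : ℵ₀ < κ)
    (hguess : ∃ C : Ordinal → Set Ordinal,
      (∀ δ : Ordinal, δ < κ.ord → δ.cof = ℵ₀ →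
        C δ ⊆ Set.Iio δ ∧ (∀ α < δ, ∃ β ∈ C δ, α ≤ β) ∧ HasOType (C δ) Ordinal.omega0) ∧
      ∀ D : Set Ordinal, IsClubIn D κ.ord →
        ∃ δ : Ordinal, δ < κ.ord ∧ δ.cof = ℵ₀ ∧ C δ ⊆ D) :
    ∃ f : Ordinal → Ordinal → Ordinal,
      (∀ α β : Ordinal, α < β → β < κ.ord → f α β < κ.ord) ∧
      IsNormalColoring f κ.ord ∧
      TwoBounded f κ.ord ∧
      (∀ D : Set Ordinal, IsClubIn D κ.ord → ¬ IsRainbow f D) ∧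
      ∀ A : Set Ordinal, A ⊆ Set.Iio κ.ord → IsClosedSet A →
        HasOType A κ.ord → ¬ IsRainbow f A :=
  let ⟨_, hC, hG⟩ := hguess
  stmt2_general (S := {δ | δ < κ.ord ∧ δ.cof = ℵ₀})
    { lt := fun _ h => h.1
      isSuccLimit := fun _ h => one_lt_cof_iff.1 (h.2.symm ▸ one_lt_aleph0)
      isCofinalIn := fun δ h => ⟨(hC δ h.1 h.2).1, (hC δ h.1 h.2).2.1⟩
      exists_subset := fun D hD => (hG D hD).imp fun _ h => ⟨⟨h.1, h.2.1⟩, h.2.2⟩ }
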